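/- arXiv:1209.4251 — 2 statements merged into one kernel-verified Lean document; each statement's English description precedes it below -/
import Mathlib

section
/- (Helicity conservation on closed moving 3-surfaces.) Let n ≥ 1 and let u : ℝ × ℝⁿ → ℝⁿ be smooth with ∂ₜu + (u·∇)u = −∇h for some continuously differentiable h : ℝ × ℝⁿ → ℝ. Let Ψ : ℝ × ℝ³ → ℝⁿ be twice continuously differentiable, 1-periodic in each of the three surface parameters s₁, s₂, s₃, and satisfy ∂ₜΨ(t,s) = u(t, Ψ(t,s)) for all (t,s). Define the helicity density as the pullback of the 3-form u♭ ∧ ω: H(t,s) = ⟨u, ∂₁Ψ⟩ ω(∂₂Ψ, ∂₃Ψ) − ⟨u, ∂₂Ψ⟩ ω(∂₁Ψ, ∂₃Ψ) + ⟨u, ∂₃Ψ⟩ ω(∂₁Ψ, ∂₂Ψ), where u and ω are evaluated at (t, Ψ(t,s)) and ∂ₐΨ at (t,s). Then t ↦ ∫_{[0,1]³} H(t,s) ds is constant. -/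
open scoped RealInnerProductSpace

/-- The vorticity 2-form `ω(t,x)(v,w) = ⟨D_x u v, w⟩ − ⟨D_x u w, v⟩` of a
time-dependent velocity field. -/
noncomputable def vorticity2Form {n : ℕ}
    (u : ℝ × EuclideanSpace ℝ (Fin n) → EuclideanSpace ℝ (Fin n))
    (t : ℝ) (x v w : EuclideanSpace ℝ (Fin n)) : ℝ :=
  ⟪fderiv ℝ (fun y => u (t, y)) x v, w⟫ - ⟪fderiv ℝ (fun y => u (t, y)) x w, v⟫

/-- The helicity density: pullback of the 3-form `u♭ ∧ ω` along a moving
parametrized 3-surface `Ψ`. -/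
noncomputable def helicityDensity {n : ℕ}
    (u : ℝ × EuclideanSpace ℝ (Fin n) → EuclideanSpace ℝ (Fin n))
    (Ψ : ℝ × (Fin 3 → ℝ) → EuclideanSpace ℝ (Fin n))
    (t : ℝ) (s : Fin 3 → ℝ) : ℝ :=
  ⟪u (t, Ψ (t, s)), fderiv ℝ (fun s' => Ψ (t, s')) s (Pi.single 0 1)⟫ *
      vorticity2Form u t (Ψ (t, s))
        (fderiv ℝ (fun s' => Ψ (t, s')) s (Pi.single 1 1))
        (fderiv ℝ (fun s' => Ψ (t, s')) s (Pi.single 2 1)) -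
    ⟪u (t, Ψ (t, s)), fderiv ℝ (fun s' => Ψ (t, s')) s (Pi.single 1 1)⟫ *
      vorticity2Form u t (Ψ (t, s))
        (fderiv ℝ (fun s' => Ψ (t, s')) s (Pi.single 0 1))
        (fderiv ℝ (fun s' => Ψ (t, s')) s (Pi.single 2 1)) +
    ⟪u (t, Ψ (t, s)), fderiv ℝ (fun s' => Ψ (t, s')) s (Pi.single 2 1)⟫ *
      vorticity2Form u t (Ψ (t, s))
        (fderiv ℝ (fun s' => Ψ (t, s')) s (Pi.single 0 1))
        (fderiv ℝ (fun s' => Ψ (t, s')) s (Pi.single 1 1))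


noncomputable def hcP {F : Type*} [NormedAddCommGroup F] [NormedSpace ℝ F] (i : Fin 4)
    (φ : (Fin 4 → ℝ) → F) : (Fin 4 → ℝ) → F := fun y => fderiv ℝ φ y (Pi.single i 1)

section
variable {F : Type*} [NormedAddCommGroup F] [InnerProductSpace ℝ F]

lemma hcP_contDiff {F : Type*} [NormedAddCommGroup F] [NormedSpace ℝ F] {φ : (Fin 4 → ℝ) → F} (hφ : ContDiff ℝ 2 φ) (i : Fin 4) :
    ContDiff ℝ 1 (hcP i φ) := by
  unfold hcP
  exact (hφ.fderiv_right (m := 1) (by norm_num)).clm_apply contDiff_const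

lemma hcP_comm {F : Type*} [NormedAddCommGroup F] [NormedSpace ℝ F] {φ : (Fin 4 → ℝ) → F} (hφ : ContDiff ℝ 2 φ) (i j : Fin 4) (y : Fin 4 → ℝ) :
    hcP i (hcP j φ) y = hcP j (hcP i φ) y := by
  have hs : IsSymmSndFDerivAt ℝ φ y :=
    hφ.contDiffAt.isSymmSndFDerivAt (by simp)
  have hd : DifferentiableAt ℝ (fderiv ℝ φ) y :=
    ((hφ.fderiv_right (m := 1) (by norm_num)).differentiable (by norm_num)) y
  have key : ∀ a b : Fin 4, hcP a (hcP b φ) y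
      = fderiv ℝ (fderiv ℝ φ) y (Pi.single a 1) (Pi.single b 1) := by
    intro a b
    unfold hcP
    rw [fderiv_clm_apply hd (differentiableAt_const _)]
    simp
  rw [key, key]
  exact hs _ _

lemma hcP_inner {φ ψ : (Fin 4 → ℝ) → F} (hφ : ContDiff ℝ 1 φ) (hψ : ContDiff ℝ 1 ψ)
    (i : Fin 4) (y : Fin 4 → ℝ) :
    hcP i (fun y => ⟪φ y, ψ y⟫) y = ⟪hcP i φ y, ψ y⟫ + ⟪φ y, hcP i ψ y⟫ := by
  unfold hcP
  rw [fderiv_inner_apply ℝ (hφ.differentiable (by norm_num) y) (hψ.differentiable (by norm_num) y)]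
  ring

lemma hcP_sub {φ ψ : (Fin 4 → ℝ) → ℝ} (hφ : ContDiff ℝ 1 φ) (hψ : ContDiff ℝ 1 ψ)
    (i : Fin 4) (y : Fin 4 → ℝ) :
    hcP i (fun y => φ y - ψ y) y = hcP i φ y - hcP i ψ y := by
  unfold hcP
  rw [fderiv_fun_sub (hφ.differentiable (by norm_num) y) (hψ.differentiable (by norm_num) y)]
  rfl

lemma hcP_add {φ ψ : (Fin 4 → ℝ) → ℝ} (hφ : ContDiff ℝ 1 φ) (hψ : ContDiff ℝ 1 ψ)
    (i : Fin 4) (y : Fin 4 → ℝ) :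
    hcP i (fun y => φ y + ψ y) y = hcP i φ y + hcP i ψ y := by
  unfold hcP
  rw [fderiv_fun_add (hφ.differentiable (by norm_num) y) (hψ.differentiable (by norm_num) y)]
  rfl

lemma hcP_neg {φ : (Fin 4 → ℝ) → ℝ} (i : Fin 4) (y : Fin 4 → ℝ) :
    hcP i (fun y => - φ y) y = - hcP i φ y := by
  unfold hcP
  rw [fderiv_fun_neg]
  rfl

lemma hcP_mul {φ ψ : (Fin 4 → ℝ) → ℝ} (hφ : ContDiff ℝ 1 φ) (hψ : ContDiff ℝ 1 ψ)
    (i : Fin 4) (y : Fin 4 → ℝ) :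
    hcP i (fun y => φ y * ψ y) y = hcP i φ y * ψ y + φ y * hcP i ψ y := by
  unfold hcP
  rw [fderiv_fun_mul (hφ.differentiable (by norm_num) y) (hψ.differentiable (by norm_num) y)]
  simp
  ring

/-- Inclusion of a time slice has constant derivative. -/
lemma hc_cons_hasFDerivAt (t : ℝ) (z : Fin 3 → ℝ) :
    HasFDerivAt (fun z : Fin 3 → ℝ => (Fin.cons t z : Fin 4 → ℝ))
      (ContinuousLinearMap.pi (Fin.cons 0 (fun i => ContinuousLinearMap.proj i)) :
        (Fin 3 → ℝ) →L[ℝ] (Fin 4 → ℝ)) z := by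
  rw [hasFDerivAt_pi']
  intro i
  refine Fin.cases ?_ (fun j => ?_) i
  · simpa using hasFDerivAt_const t z
  · simpa using hasFDerivAt_apply j z

lemma hc_slice {F : Type*} [NormedAddCommGroup F] [NormedSpace ℝ F] {φ : (Fin 4 → ℝ) → F}
    (hφ : Differentiable ℝ φ) (t : ℝ) (z : Fin 3 → ℝ) (a : Fin 3) :
    fderiv ℝ (fun z : Fin 3 → ℝ => φ (Fin.cons t z)) z (Pi.single a 1)
      = hcP a.succ φ (Fin.cons t z) := by
  have := (hφ (Fin.cons t z)).hasFDerivAt.comp z (hc_cons_hasFDerivAt t z)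
  have h2 := this.fderiv
  simp only [Function.comp_def] at h2
  rw [h2]
  unfold hcP
  simp only [ContinuousLinearMap.comp_apply]
  congr 1
  ext i
  refine Fin.cases ?_ (fun j => ?_) i
  · simp
  · simp [Pi.single_apply]

lemma hc_cons_contDiff (t : ℝ) :
    ContDiff ℝ 1 (fun z : Fin 3 → ℝ => (Fin.cons t z : Fin 4 → ℝ)) := by
  rw [contDiff_pi]
  intro i
  refine Fin.cases ?_ (fun j => ?_) i
  · simpa using contDiff_const
  · simpa using contDiff_apply ℝ ℝ j

lemma hc_symm {g : (Fin 4 → ℝ) → ℝ} (hg : ContDiff ℝ 1 g) {k : Fin 3 → (Fin 4 → ℝ) → ℝ}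
    (hk : ∀ i, ContDiff ℝ 1 (k i)) (hgk : ∀ i y, hcP i.succ g y = k i y) (a b : Fin 3)
    (y : Fin 4 → ℝ) : hcP a.succ (k b) y = hcP b.succ (k a) y := by
  have hgd : Differentiable ℝ g := hg.differentiable (by norm_num)
  obtain ⟨t, z, rfl⟩ : ∃ t z, y = (Fin.cons t z : Fin 4 → ℝ) :=
    ⟨y 0, Fin.tail y, (Fin.cons_self_tail y).symm⟩
  set G : (Fin 3 → ℝ) → ℝ := fun z => g (Fin.cons t z) with hG
  have hGd : Differentiable ℝ G :=
    hgd.comp ((hc_cons_contDiff t).differentiable (by norm_num))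
  have hGa : ∀ (i : Fin 3) z, fderiv ℝ G z (Pi.single i 1) = k i (Fin.cons t z) := by
    intro i z
    rw [hG, hc_slice hgd, hgk]
  have hfG : ContDiff ℝ 1 (fderiv ℝ G) := by
    rw [contDiff_clm_apply_iff]
    intro v
    have : (fun z => fderiv ℝ G z v) = fun z => ∑ i, v i * k i (Fin.cons t z) := by
      funext z
      conv_lhs => rw [pi_eq_sum_univ' v]
      simp only [map_sum, map_smul, smul_eq_mul]
      refine Finset.sum_congr rfl fun i _ => ?_
      rw [← hGa i z]
    rw [this]
    exact ContDiff.sum fun i _ => contDiff_const.mul ((hk i).comp (hc_cons_contDiff t))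
  have hd : DifferentiableAt ℝ (fderiv ℝ G) z := hfG.differentiable (by norm_num) z
  have hs := second_derivative_symmetric (fun y => (hGd y).hasFDerivAt) hd.hasFDerivAt
    (Pi.single a 1) (Pi.single b 1)
  have key : ∀ a b : Fin 3, hcP a.succ (k b) (Fin.cons t z)
      = fderiv ℝ (fderiv ℝ G) z (Pi.single a 1) (Pi.single b 1) := by
    intro a b
    rw [← hc_slice ((hk b).differentiable (by norm_num))]
    simp_rw [← hGa]
    rw [fderiv_clm_apply hd (differentiableAt_const _)]
    simp
  rw [key, key]
  exact hs

lemma hcP_per {F : Type*} [NormedAddCommGroup F] [NormedSpace ℝ F] {φ : (Fin 4 → ℝ) → F}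
    {v : Fin 4 → ℝ} (hφ : ∀ y, φ (y + v) = φ y) (i : Fin 4) (y : Fin 4 → ℝ) :
    hcP i φ (y + v) = hcP i φ y := by
  unfold hcP
  rw [← fderiv_comp_add_right]
  simp_rw [hφ]

/-- pulled back velocity 1-form -/
noncomputable def hcA (Φ V : (Fin 4 → ℝ) → F) (a : Fin 4) : (Fin 4 → ℝ) → ℝ :=
  fun y => ⟪V y, hcP a Φ y⟫

/-- pulled back vorticity 2-form -/
noncomputable def hcW (Φ V : (Fin 4 → ℝ) → F) (a b : Fin 4) : (Fin 4 → ℝ) → ℝ :=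
  fun y => ⟪hcP a V y, hcP b Φ y⟫ - ⟪hcP b V y, hcP a Φ y⟫

/-- Bernoulli-type potential -/
noncomputable def hcf (V : (Fin 4 → ℝ) → F) (g : (Fin 4 → ℝ) → ℝ) : (Fin 4 → ℝ) → ℝ :=
  fun y => (1 / 2) * ⟪V y, V y⟫ - g y

/-- space-time helicity current -/
noncomputable def hcJ (Φ V : (Fin 4 → ℝ) → F) (g : (Fin 4 → ℝ) → ℝ) :
    Fin 4 → (Fin 4 → ℝ) → ℝ :=
  ![fun y => hcA Φ V 1 y * hcW Φ V 2 3 y - hcA Φ V 2 y * hcW Φ V 1 3 y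
      + hcA Φ V 3 y * hcW Φ V 1 2 y,
    fun y => - (hcf V g y * hcW Φ V 2 3 y),
    fun y => hcf V g y * hcW Φ V 1 3 y,
    fun y => - (hcf V g y * hcW Φ V 1 2 y)]

lemma hcA_contDiff {Φ V : (Fin 4 → ℝ) → F} (hΦ : ContDiff ℝ 2 Φ) (hV : ContDiff ℝ 2 V)
    (a : Fin 4) : ContDiff ℝ 1 (hcA Φ V a) :=
  (hV.of_le (by norm_num)).inner ℝ (hcP_contDiff hΦ a)

lemma hcW_contDiff {Φ V : (Fin 4 → ℝ) → F} (hΦ : ContDiff ℝ 2 Φ) (hV : ContDiff ℝ 2 V)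
    (a b : Fin 4) : ContDiff ℝ 1 (hcW Φ V a b) :=
  ((hcP_contDiff hV a).inner ℝ (hcP_contDiff hΦ b)).sub
    ((hcP_contDiff hV b).inner ℝ (hcP_contDiff hΦ a))

lemma hcf_contDiff {V : (Fin 4 → ℝ) → F} {g : (Fin 4 → ℝ) → ℝ} (hV : ContDiff ℝ 2 V)
    (hg : ContDiff ℝ 1 g) : ContDiff ℝ 1 (hcf V g) := by
  have := hV.of_le (show (1 : WithTop ℕ∞) ≤ 2 by norm_num)
  exact (contDiff_const.mul (this.inner ℝ this)).sub hg

lemma hcW_deriv {Φ V : (Fin 4 → ℝ) → F} (hΦ : ContDiff ℝ 2 Φ) (hV : ContDiff ℝ 2 V)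
    (c a b : Fin 4) (y : Fin 4 → ℝ) : hcP c (hcW Φ V a b) y =
      (⟪hcP c (hcP a V) y, hcP b Φ y⟫ + ⟪hcP a V y, hcP c (hcP b Φ) y⟫)
      - (⟪hcP c (hcP b V) y, hcP a Φ y⟫ + ⟪hcP b V y, hcP c (hcP a Φ) y⟫) := by
  unfold hcW
  rw [hcP_sub ((hcP_contDiff hV a).inner ℝ (hcP_contDiff hΦ b))
    ((hcP_contDiff hV b).inner ℝ (hcP_contDiff hΦ a)),
    hcP_inner (hcP_contDiff hV a) (hcP_contDiff hΦ b),
    hcP_inner (hcP_contDiff hV b) (hcP_contDiff hΦ a)]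

lemma hcW_closed {Φ V : (Fin 4 → ℝ) → F} (hΦ : ContDiff ℝ 2 Φ) (hV : ContDiff ℝ 2 V)
    (y : Fin 4 → ℝ) :
    hcP 1 (hcW Φ V 2 3) y - hcP 2 (hcW Φ V 1 3) y + hcP 3 (hcW Φ V 1 2) y = 0 := by
  simp only [hcW_deriv hΦ hV]
  rw [hcP_comm hV 2 1, hcP_comm hV 3 1, hcP_comm hV 3 2,
    hcP_comm hΦ 2 1, hcP_comm hΦ 3 1, hcP_comm hΦ 3 2]
  ring

lemma hcW_time {Φ V : (Fin 4 → ℝ) → F} {g : (Fin 4 → ℝ) → ℝ}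
    (hΦ : ContDiff ℝ 2 Φ) (hV : ContDiff ℝ 2 V)
    (hg : ContDiff ℝ 1 g) (h0 : ∀ y, hcP 0 Φ y = V y)
    (hE : ∀ (i : Fin 3) y, ⟪hcP 0 V y, hcP i.succ Φ y⟫ = - hcP i.succ g y)
    (a b : Fin 3) (y : Fin 4 → ℝ) : hcP 0 (hcW Φ V a.succ b.succ) y = 0 := by
  have h0' : hcP 0 Φ = V := funext h0
  have hs := hc_symm (g := fun y => - g y) hg.neg
    (k := fun i y => ⟪hcP 0 V y, hcP i.succ Φ y⟫)
    (fun i => (hcP_contDiff hV 0).inner ℝ (hcP_contDiff hΦ i.succ))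
    (fun i y => by rw [hcP_neg, hE]) a b y
  rw [hcP_inner (hcP_contDiff hV 0) (hcP_contDiff hΦ _),
    hcP_inner (hcP_contDiff hV 0) (hcP_contDiff hΦ _), hcP_comm hΦ a.succ b.succ] at hs
  rw [hcW_deriv hΦ hV, hcP_comm hΦ 0 b.succ, hcP_comm hΦ 0 a.succ, h0',
    hcP_comm hV 0 a.succ, hcP_comm hV 0 b.succ, real_inner_comm (hcP a.succ V y)]
  linarith

lemma hcA_time {Φ V : (Fin 4 → ℝ) → F} {g : (Fin 4 → ℝ) → ℝ}
    (hΦ : ContDiff ℝ 2 Φ) (hV : ContDiff ℝ 2 V)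
    (hg : ContDiff ℝ 1 g) (h0 : ∀ y, hcP 0 Φ y = V y)
    (hE : ∀ (i : Fin 3) y, ⟪hcP 0 V y, hcP i.succ Φ y⟫ = - hcP i.succ g y)
    (a : Fin 3) (y : Fin 4 → ℝ) : hcP 0 (hcA Φ V a.succ) y = hcP a.succ (hcf V g) y := by
  have h0' : hcP 0 Φ = V := funext h0
  have hV1 := hV.of_le (show (1 : WithTop ℕ∞) ≤ 2 by norm_num)
  unfold hcA hcf
  rw [hcP_inner hV1 (hcP_contDiff hΦ _), hE, hcP_comm hΦ, h0',
    hcP_sub (contDiff_const.mul (hV1.inner ℝ hV1)) hg,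
    hcP_mul contDiff_const (hV1.inner ℝ hV1), hcP_inner hV1 hV1,
    real_inner_comm (V y) (hcP a.succ V y)]
  have : hcP a.succ (fun _ => (1 / 2 : ℝ)) y = 0 := by simp [hcP]
  rw [this]
  ring

lemma hcJ_contDiff {Φ V : (Fin 4 → ℝ) → F} {g : (Fin 4 → ℝ) → ℝ}
    (hΦ : ContDiff ℝ 2 Φ) (hV : ContDiff ℝ 2 V) (hg : ContDiff ℝ 1 g) (i : Fin 4) :
    ContDiff ℝ 1 (hcJ Φ V g i) := by
  have hA := hcA_contDiff hΦ hV
  have hW := hcW_contDiff hΦ hV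
  have hf := hcf_contDiff hV hg
  fin_cases i
  · exact (((hA 1).mul (hW 2 3)).sub ((hA 2).mul (hW 1 3))).add ((hA 3).mul (hW 1 2))
  · exact (hf.mul (hW 2 3)).neg
  · exact hf.mul (hW 1 3)
  · exact (hf.mul (hW 1 2)).neg

lemma hcJ_div {Φ V : (Fin 4 → ℝ) → F} {g : (Fin 4 → ℝ) → ℝ}
    (hΦ : ContDiff ℝ 2 Φ) (hV : ContDiff ℝ 2 V)
    (hg : ContDiff ℝ 1 g) (h0 : ∀ y, hcP 0 Φ y = V y)
    (hE : ∀ (i : Fin 3) y, ⟪hcP 0 V y, hcP i.succ Φ y⟫ = - hcP i.succ g y)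
    (y : Fin 4 → ℝ) : ∑ i, hcP i (hcJ Φ V g i) y = 0 := by
  have hA := hcA_contDiff hΦ hV
  have hW := hcW_contDiff hΦ hV
  have hf := hcf_contDiff hV hg
  rw [Fin.sum_univ_four]
  have e0 : hcP 0 (hcJ Φ V g 0) y = hcP 1 (hcf V g) y * hcW Φ V 2 3 y
      - hcP 2 (hcf V g) y * hcW Φ V 1 3 y + hcP 3 (hcf V g) y * hcW Φ V 1 2 y := by
    have t1 := hcA_time hΦ hV hg h0 hE 0 y
    have t2 := hcA_time hΦ hV hg h0 hE 1 y
    have t3 := hcA_time hΦ hV hg h0 hE 2 y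
    have w1 := hcW_time hΦ hV hg h0 hE 1 2 y
    have w2 := hcW_time hΦ hV hg h0 hE 0 2 y
    have w3 := hcW_time hΦ hV hg h0 hE 0 1 y
    change hcP 0 (hcA Φ V 1) y = hcP 1 (hcf V g) y at t1
    change hcP 0 (hcA Φ V 2) y = hcP 2 (hcf V g) y at t2
    change hcP 0 (hcA Φ V 3) y = hcP 3 (hcf V g) y at t3
    change hcP 0 (hcW Φ V 2 3) y = 0 at w1
    change hcP 0 (hcW Φ V 1 3) y = 0 at w2
    change hcP 0 (hcW Φ V 1 2) y = 0 at w3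
    change hcP 0 (fun y => hcA Φ V 1 y * hcW Φ V 2 3 y - hcA Φ V 2 y * hcW Φ V 1 3 y
      + hcA Φ V 3 y * hcW Φ V 1 2 y) y = _
    rw [hcP_add (((hA 1).mul (hW 2 3)).sub ((hA 2).mul (hW 1 3))) ((hA 3).mul (hW 1 2)),
      hcP_sub ((hA 1).mul (hW 2 3)) ((hA 2).mul (hW 1 3)),
      hcP_mul (hA 1) (hW 2 3), hcP_mul (hA 2) (hW 1 3), hcP_mul (hA 3) (hW 1 2),
      t1, t2, t3, w1, w2, w3]
    ring
  have e1 : hcP 1 (hcJ Φ V g 1) y = - (hcP 1 (hcf V g) y * hcW Φ V 2 3 y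
      + hcf V g y * hcP 1 (hcW Φ V 2 3) y) := by
    change hcP 1 (fun y => - (hcf V g y * hcW Φ V 2 3 y)) y = _
    rw [hcP_neg, hcP_mul hf (hW 2 3)]
  have e2 : hcP 2 (hcJ Φ V g 2) y = (hcP 2 (hcf V g) y * hcW Φ V 1 3 y
      + hcf V g y * hcP 2 (hcW Φ V 1 3) y) := by
    change hcP 2 (fun y => (hcf V g y * hcW Φ V 1 3 y)) y = _
    rw [hcP_mul hf (hW 1 3)]
  have e3 : hcP 3 (hcJ Φ V g 3) y = - (hcP 3 (hcf V g) y * hcW Φ V 1 2 y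
      + hcf V g y * hcP 3 (hcW Φ V 1 2) y) := by
    change hcP 3 (fun y => - (hcf V g y * hcW Φ V 1 2 y)) y = _
    rw [hcP_neg, hcP_mul hf (hW 1 2)]
  rw [e0, e1, e2, e3]
  linear_combination (- hcf V g y) * hcW_closed hΦ hV y

lemma hcJ_per {Φ V : (Fin 4 → ℝ) → F} {g : (Fin 4 → ℝ) → ℝ} {v : Fin 4 → ℝ}
    (pΦ : ∀ y, Φ (y + v) = Φ y) (pV : ∀ y, V (y + v) = V y) (pg : ∀ y, g (y + v) = g y)
    (i : Fin 4) (y : Fin 4 → ℝ) : hcJ Φ V g i (y + v) = hcJ Φ V g i y := by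
  fin_cases i <;>
  simp [hcJ, hcA, hcW, hcf, hcP_per pΦ, hcP_per pV, pg, pV]

open MeasureTheory in
lemma hc_main {Φ V : (Fin 4 → ℝ) → F} {g : (Fin 4 → ℝ) → ℝ}
    (hΦ : ContDiff ℝ 2 Φ) (hV : ContDiff ℝ 2 V)
    (hg : ContDiff ℝ 1 g) (h0 : ∀ y, hcP 0 Φ y = V y)
    (hE : ∀ (i : Fin 3) y, ⟪hcP 0 V y, hcP i.succ Φ y⟫ = - hcP i.succ g y)
    (pΦ : ∀ (a : Fin 3) y, Φ (y + Pi.single a.succ 1) = Φ y)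
    (pV : ∀ (a : Fin 3) y, V (y + Pi.single a.succ 1) = V y)
    (pg : ∀ (a : Fin 3) y, g (y + Pi.single a.succ 1) = g y)
    (t₁ t₂ : ℝ) (ht : t₁ ≤ t₂) :
    (∫ s in Set.Icc (0 : Fin 3 → ℝ) 1, hcJ Φ V g 0 (Fin.cons t₁ s))
      = ∫ s in Set.Icc (0 : Fin 3 → ℝ) 1, hcJ Φ V g 0 (Fin.cons t₂ s) := by
  have hJ := hcJ_contDiff hΦ hV hg
  have hdiv : ∀ y, ∑ i, fderiv ℝ (hcJ Φ V g i) y (Pi.single i 1) = 0 :=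
    hcJ_div hΦ hV hg h0 hE
  have key := integral_divergence_of_hasFDerivAt_off_countable'
    (Fin.cons t₁ (0 : Fin 3 → ℝ)) (Fin.cons t₂ (1 : Fin 3 → ℝ))
    (by
      intro i
      refine Fin.cases ?_ (fun j => ?_) i
      · simpa using ht
      · simp)
    (hcJ Φ V g) (fun i => fderiv ℝ (hcJ Φ V g i)) ∅ Set.countable_empty
    (fun i => (hJ i).continuous.continuousOn)
    (fun x _ i => ((hJ i).differentiable (by norm_num) x).hasFDerivAt)
    (by simp only [hdiv]; exact integrableOn_zero)
  simp only [hdiv, integral_zero] at key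
  rw [Fin.sum_univ_succ] at key
  have hside : ∀ (a : Fin 3) (x : Fin 3 → ℝ),
      hcJ Φ V g a.succ (a.succ.insertNth ((Fin.cons t₂ (1 : Fin 3 → ℝ) : Fin 4 → ℝ) a.succ) x)
      = hcJ Φ V g a.succ
        (a.succ.insertNth ((Fin.cons t₁ (0 : Fin 3 → ℝ) : Fin 4 → ℝ) a.succ) x) := by
    intro a x
    refine Eq.trans ?_ (hcJ_per (pΦ a) (pV a) (pg a) _ _)
    congr 1
    ext j
    refine Fin.succAboveCases a.succ ?_ (fun k => ?_) j
    · simp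
    · simp [Fin.succAbove_ne]
  simp only [hside, sub_self, Finset.sum_const_zero, add_zero] at key
  have c1 : (Fin.cons t₁ (0 : Fin 3 → ℝ) : Fin 4 → ℝ) ∘ Fin.succAbove 0 = 0 := by
    ext i; simp
  have c2 : (Fin.cons t₂ (1 : Fin 3 → ℝ) : Fin 4 → ℝ) ∘ Fin.succAbove 0 = 1 := by
    ext i; simp
  rw [c1, c2] at key
  simp only [Fin.insertNth_zero', Fin.cons_zero] at key
  linarith

end

lemma hc_time {F : Type*} [NormedAddCommGroup F] [NormedSpace ℝ F] {φ : (Fin 4 → ℝ) → F}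
    (hφ : Differentiable ℝ φ) (t : ℝ) (z : Fin 3 → ℝ) :
    HasDerivAt (fun τ : ℝ => φ (Fin.cons τ z)) (hcP 0 φ (Fin.cons t z)) t := by
  have h1 : HasDerivAt (fun τ : ℝ => (Fin.cons τ z : Fin 4 → ℝ)) (Pi.single 0 1) t := by
    rw [hasDerivAt_pi]
    intro i
    refine Fin.cases ?_ (fun j => ?_) i
    · simpa using hasDerivAt_id' t
    · simpa using hasDerivAt_const t (z j)
  exact (hφ (Fin.cons t z)).hasFDerivAt.comp_hasDerivAt t h1

/-- chain rule for `τ ↦ k (τ, c τ)`. -/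
lemma hc_chain {E F : Type*} [NormedAddCommGroup E] [NormedSpace ℝ E]
    [NormedAddCommGroup F] [NormedSpace ℝ F] {k : ℝ × E → F} (hk : Differentiable ℝ k)
    {c : ℝ → E} {c' : E} {t : ℝ} (hc : HasDerivAt c c' t) :
    HasDerivAt (fun τ => k (τ, c τ))
      (deriv (fun τ => k (τ, c t)) t + fderiv ℝ (fun y => k (t, y)) (c t) c') t := by
  have hk' := (hk (t, c t)).hasFDerivAt
  have e1 : HasDerivAt (fun τ => k (τ, c t)) (fderiv ℝ k (t, c t) (1, 0)) t :=
    hk'.comp_hasDerivAt t ((hasDerivAt_id t).prodMk (hasDerivAt_const t (c t)))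
  have e2 : HasFDerivAt (fun y => k (t, y))
      ((fderiv ℝ k (t, c t)).comp (ContinuousLinearMap.inr ℝ ℝ E)) (c t) :=
    hk'.comp (c t) (hasFDerivAt_prodMk_right t (c t))
  have e3 : HasDerivAt (fun τ => k (τ, c τ)) (fderiv ℝ k (t, c t) (1, c')) t :=
    hk'.comp_hasDerivAt t ((hasDerivAt_id t).prodMk hc)
  rw [e1.deriv, e2.fderiv]
  convert e3 using 1
  simp [← map_add]

/-- spatial chain rule along the moving surface. -/
lemma hc_space {E F : Type*} [NormedAddCommGroup E] [NormedSpace ℝ E]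
    [NormedAddCommGroup F] [NormedSpace ℝ F] {k : ℝ × E → F} (hk : Differentiable ℝ k)
    {Φ : (Fin 4 → ℝ) → E} (hΦ : Differentiable ℝ Φ) (t : ℝ) (z : Fin 3 → ℝ) (a : Fin 3) :
    hcP a.succ (fun y => k (y 0, Φ y)) (Fin.cons t z)
      = fderiv ℝ (fun x => k (t, x)) (Φ (Fin.cons t z)) (hcP a.succ Φ (Fin.cons t z)) := by
  have hd : Differentiable ℝ (fun y : Fin 4 → ℝ => k (y 0, Φ y)) :=
    hk.comp ((differentiable_apply 0).prodMk hΦ)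
  have hc : Differentiable ℝ (fun z : Fin 3 → ℝ => Φ (Fin.cons t z)) :=
    hΦ.comp ((hc_cons_contDiff t).differentiable (by norm_num))
  have hkt : Differentiable ℝ (fun x => k (t, x)) :=
    hk.comp ((differentiable_const t).prodMk differentiable_id)
  rw [← hc_slice hd, ← hc_slice hΦ]
  simp only [Fin.cons_zero]
  have := ((hkt _).hasFDerivAt.comp z (hc z).hasFDerivAt).fderiv
  simp only [Function.comp_def] at this
  rw [this]
  rfl

/-- Helicity conservation on closed moving 3-surfaces in isentropic flow. -/
theorem helicity_conserved_closed_3surface (n : ℕ) (hn : 1 ≤ n)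
    (u : ℝ × EuclideanSpace ℝ (Fin n) → EuclideanSpace ℝ (Fin n))
    (hu : ContDiff ℝ (⊤ : ℕ∞) u)
    (h : ℝ × EuclideanSpace ℝ (Fin n) → ℝ) (hh : ContDiff ℝ 1 h)
    (euler : ∀ (t : ℝ) (x : EuclideanSpace ℝ (Fin n)),
      deriv (fun τ => u (τ, x)) t + fderiv ℝ (fun y => u (t, y)) x (u (t, x))
        = -gradient (fun y => h (t, y)) x)
    (Ψ : ℝ × (Fin 3 → ℝ) → EuclideanSpace ℝ (Fin n)) (hΨ : ContDiff ℝ 2 Ψ)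
    (hper : ∀ (t : ℝ) (s : Fin 3 → ℝ) (a : Fin 3), Ψ (t, s + Pi.single a 1) = Ψ (t, s))
    (htrans : ∀ (t : ℝ) (s : Fin 3 → ℝ), deriv (fun τ => Ψ (τ, s)) t = u (t, Ψ (t, s))) :
    ∀ t₁ t₂ : ℝ,
      (∫ s in Set.Icc (0 : Fin 3 → ℝ) 1, helicityDensity u Ψ t₁ s)
        = ∫ s in Set.Icc (0 : Fin 3 → ℝ) 1, helicityDensity u Ψ t₂ s := by
  have hu1 : Differentiable ℝ u := hu.differentiable (by simp)
  have hu2 : ContDiff ℝ 2 u := contDiff_infty.1 hu 2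
  have hh1 : Differentiable ℝ h := hh.differentiable (by norm_num)
  set Φ : (Fin 4 → ℝ) → EuclideanSpace ℝ (Fin n) := fun y => Ψ (y 0, Fin.tail y) with hΦdef
  set V : (Fin 4 → ℝ) → EuclideanSpace ℝ (Fin n) := fun y => u (y 0, Φ y) with hVdef
  set g : (Fin 4 → ℝ) → ℝ := fun y => h (y 0, Φ y) with hgdef
  have hcoord : ContDiff ℝ 2 (fun y : Fin 4 → ℝ => y 0) := contDiff_apply ℝ ℝ 0
  have htail : ContDiff ℝ 2 (fun y : Fin 4 → ℝ => Fin.tail y) := by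
    rw [contDiff_pi]
    intro i
    exact contDiff_apply ℝ ℝ i.succ
  have hΦ : ContDiff ℝ 2 Φ := hΨ.comp (hcoord.prodMk htail)
  have hV : ContDiff ℝ 2 V := hu2.comp (hcoord.prodMk hΦ)
  have hg : ContDiff ℝ 1 g :=
    hh.comp ((hcoord.prodMk hΦ).of_le (by norm_num))
  have hΦd : Differentiable ℝ Φ := hΦ.differentiable (by norm_num)
  have hVd : Differentiable ℝ V := hV.differentiable (by norm_num)
  have hΦc : ∀ (t : ℝ) (z : Fin 3 → ℝ), Φ (Fin.cons t z) = Ψ (t, z) := by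
    intro t z
    simp [hΦdef]
  have hVc : ∀ (t : ℝ) (z : Fin 3 → ℝ), V (Fin.cons t z) = u (t, Ψ (t, z)) := by
    intro t z
    simp [hVdef, hΦc]
  have h0c : ∀ (t : ℝ) (z : Fin 3 → ℝ), hcP 0 Φ (Fin.cons t z) = V (Fin.cons t z) := by
    intro t z
    rw [hVc, ← htrans, ← (hc_time hΦd t z).deriv]
    simp only [hΦc]
  have hsplit : ∀ y : Fin 4 → ℝ, ∃ (t : ℝ) (z : Fin 3 → ℝ), y = Fin.cons t z := fun y =>
    ⟨y 0, Fin.tail y, (Fin.cons_self_tail y).symm⟩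
  have h0 : ∀ y, hcP 0 Φ y = V y := by
    intro y
    obtain ⟨t, z, rfl⟩ := hsplit y
    exact h0c t z
  have hE : ∀ (i : Fin 3) y, ⟪hcP 0 V y, hcP i.succ Φ y⟫ = - hcP i.succ g y := by
    intro i y
    obtain ⟨t, z, rfl⟩ := hsplit y
    have hVt : hcP 0 V (Fin.cons t z) = -gradient (fun y => h (t, y)) (Ψ (t, z)) := by
      rw [← euler, ← (hc_time hVd t z).deriv]
      have h1 := hc_time hΦd t z
      rw [h0c, hVc] at h1
      have h2 := (hc_chain hu1 h1).deriv
      simp only [hΦc] at h2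
      simp only [hVc]
      exact h2
    rw [hVt, hgdef, hc_space hh1 hΦd, inner_neg_left, hΦc]
    congr 1
    simp [gradient]
  have hp : ∀ (a : Fin 3) (y : Fin 4 → ℝ), (y + Pi.single a.succ 1 : Fin 4 → ℝ) 0 = y 0 := by
    intro a y
    simp
  have pΦ : ∀ (a : Fin 3) y, Φ (y + Pi.single a.succ 1) = Φ y := by
    intro a y
    have e : Fin.tail (y + Pi.single a.succ 1 : Fin 4 → ℝ) = Fin.tail y + Pi.single a 1 := by
      ext j
      simp [Fin.tail, Pi.single_apply]
    simp only [hΦdef, hp]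
    rw [e, hper]
  have pV : ∀ (a : Fin 3) y, V (y + Pi.single a.succ 1) = V y := by
    intro a y
    simp only [hVdef, hp, pΦ]
  have pg : ∀ (a : Fin 3) y, g (y + Pi.single a.succ 1) = g y := by
    intro a y
    simp only [hgdef, hp, pΦ]
  have hH : ∀ (t : ℝ) (s : Fin 3 → ℝ),
      helicityDensity u Ψ t s = hcJ Φ V g 0 (Fin.cons t s) := by
    intro t s
    have d1 : ∀ a : Fin 3, fderiv ℝ (fun s' => Ψ (t, s')) s (Pi.single a 1)
        = hcP a.succ Φ (Fin.cons t s) := by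
      intro a
      rw [← hc_slice hΦd]
      simp only [hΦc]
    have d2 : ∀ a : Fin 3, fderiv ℝ (fun x => u (t, x)) (Ψ (t, s)) (hcP a.succ Φ (Fin.cons t s))
        = hcP a.succ V (Fin.cons t s) := by
      intro a
      rw [hVdef, hc_space hu1 hΦd, hΦc]
    unfold helicityDensity vorticity2Form
    simp only [d1, d2]
    rw [← hVc]
    rfl
  intro t₁ t₂
  simp only [hH]
  rcases le_total t₁ t₂ with ht | ht
  · exact hc_main hΦ hV hg h0 hE pΦ pV pg t₁ t₂ ht
  · exact (hc_main hΦ hV hg h0 hE pΦ pV pg t₂ t₁ ht).symm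
end

section
/- (Three-dimensional entropy circulation constants of motion.) Let u : ℝ × ℝ³ → ℝ³ and ρ, S, g, h : ℝ × ℝ³ → ℝ be smooth with ρ > 0, satisfying ∂ₜu + (u·∇)u = ∇g + h∇S, ∂ₜρ + div(ρu) = 0, and ∂ₜS + ⟨u, ∇S⟩ = 0. Let φ : ℝ × ℝ³ → ℝ³ be a continuously differentiable flow of u (φ(0,x) = x, ∂ₜφ(t,x) = u(t,φ(t,x)), with ∂ₜD_xφ = D_xu(t,φ)∘D_xφ) such that φ(t,·) is injective for each t. Let f : ℝ × ℝ → ℝ be continuous and let V₀ ⊆ ℝ³ be a bounded measurable set. Writing ◦ = ⟨∇S, curl u⟩, the entropy circulation integral t ↦ ∫_{φ(t,·)''V₀} f(S(t,x), ◦(t,x)/ρ(t,x)) · ◦(t,x) dx is constant, equal to its value at t = 0. -/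
open scoped RealInnerProductSpace

/-- The curl of a vector field on `ℝ³`. -/
noncomputable def curl3 (w : EuclideanSpace ℝ (Fin 3) → EuclideanSpace ℝ (Fin 3))
    (x : EuclideanSpace ℝ (Fin 3)) : EuclideanSpace ℝ (Fin 3) :=
  (WithLp.equiv 2 (Fin 3 → ℝ)).symm
    ![fderiv ℝ w x (EuclideanSpace.single 1 1) 2 - fderiv ℝ w x (EuclideanSpace.single 2 1) 1,
      fderiv ℝ w x (EuclideanSpace.single 2 1) 0 - fderiv ℝ w x (EuclideanSpace.single 0 1) 2,
      fderiv ℝ w x (EuclideanSpace.single 0 1) 1 - fderiv ℝ w x (EuclideanSpace.single 1 1) 0]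

/-- The entropy circulation scalar `◦ = ⟨∇S, curl u⟩` in three dimensions. -/
noncomputable def entCircScalar
    (u : ℝ × EuclideanSpace ℝ (Fin 3) → EuclideanSpace ℝ (Fin 3))
    (S : ℝ × EuclideanSpace ℝ (Fin 3) → ℝ)
    (t : ℝ) (x : EuclideanSpace ℝ (Fin 3)) : ℝ :=
  ⟪gradient (fun y => S (t, y)) x, curl3 (fun y => u (t, y)) x⟫

abbrev E3 := EuclideanSpace ℝ (Fin 3)

noncomputable def pd (v : ℝ × E3) (F : ℝ × E3 → ℝ) : ℝ × E3 → ℝ := fun p => fderiv ℝ F p v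

noncomputable def sp (i : Fin 3) : ℝ × E3 := (0, EuclideanSpace.single i 1)

noncomputable def tm : ℝ × E3 := (1, 0)

lemma pd_smooth {F : ℝ × E3 → ℝ} (hF : ContDiff ℝ (⊤ : ℕ∞) F) (v : ℝ × E3) :
    ContDiff ℝ (⊤ : ℕ∞) (pd v F) := by
  unfold pd
  exact (hF.fderiv_right (m := (⊤ : ℕ∞)) (by simp)).clm_apply contDiff_const

lemma smooth_diff {F : ℝ × E3 → ℝ} (hF : ContDiff ℝ (⊤ : ℕ∞) F) : Differentiable ℝ F :=
  hF.differentiable (by simp)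

lemma pd_comm {F : ℝ × E3 → ℝ} (hF : ContDiff ℝ (⊤ : ℕ∞) F) (v w : ℝ × E3) (p : ℝ × E3) :
    pd v (pd w F) p = pd w (pd v F) p := by
  have hd : Differentiable ℝ (fderiv ℝ F) :=
    (hF.fderiv_right (m := (⊤ : ℕ∞)) (by simp)).differentiable (by simp)
  have h1 : ∀ a b : ℝ × E3, pd a (pd b F) p = fderiv ℝ (fderiv ℝ F) p a b := by
    intro a b
    unfold pd
    rw [fderiv_clm_apply (hd p) (differentiableAt_const b)]
    simp
  rw [h1, h1]
  have := (hF.contDiffAt (x := p)).isSymmSndFDerivAt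
    (by simp only [minSmoothness_of_isRCLikeNormedField]; exact WithTop.coe_le_coe.2 (le_top (a := (2 : ℕ∞))))
  exact this v w

lemma pd_add {F G : ℝ × E3 → ℝ} (hF : ContDiff ℝ (⊤ : ℕ∞) F) (hG : ContDiff ℝ (⊤ : ℕ∞) G)
    (v p : ℝ × E3) : pd v (fun q => F q + G q) p = pd v F p + pd v G p := by
  unfold pd
  rw [fderiv_fun_add (smooth_diff hF p) (smooth_diff hG p)]; rfl

lemma pd_sub {F G : ℝ × E3 → ℝ} (hF : ContDiff ℝ (⊤ : ℕ∞) F) (hG : ContDiff ℝ (⊤ : ℕ∞) G)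
    (v p : ℝ × E3) : pd v (fun q => F q - G q) p = pd v F p - pd v G p := by
  unfold pd
  rw [fderiv_fun_sub (smooth_diff hF p) (smooth_diff hG p)]; rfl

lemma pd_mul {F G : ℝ × E3 → ℝ} (hF : ContDiff ℝ (⊤ : ℕ∞) F) (hG : ContDiff ℝ (⊤ : ℕ∞) G)
    (v p : ℝ × E3) : pd v (fun q => F q * G q) p = F p * pd v G p + G p * pd v F p := by
  unfold pd
  rw [fderiv_fun_mul (smooth_diff hF p) (smooth_diff hG p)]; simp

/-- The entropy circulation in coordinates. -/
noncomputable def circ (U : Fin 3 → ℝ × E3 → ℝ) (S : ℝ × E3 → ℝ) : ℝ × E3 → ℝ := fun p =>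
  pd (sp 0) S p * (pd (sp 1) (U 2) p - pd (sp 2) (U 1) p)
  + pd (sp 1) S p * (pd (sp 2) (U 0) p - pd (sp 0) (U 2) p)
  + pd (sp 2) S p * (pd (sp 0) (U 1) p - pd (sp 1) (U 0) p)

lemma circ_smooth {U : Fin 3 → ℝ × E3 → ℝ} {S : ℝ × E3 → ℝ}
    (hU : ∀ i, ContDiff ℝ (⊤ : ℕ∞) (U i)) (hS : ContDiff ℝ (⊤ : ℕ∞) S) :
    ContDiff ℝ (⊤ : ℕ∞) (circ U S) := by
  unfold circ
  have a := pd_smooth hS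
  have b := fun i => pd_smooth (hU i)
  exact (((a _).mul ((b _ _).sub (b _ _))).add ((a _).mul ((b _ _).sub (b _ _)))).add
    ((a _).mul ((b _ _).sub (b _ _)))

lemma circ_transport {U : Fin 3 → ℝ × E3 → ℝ} {S g h : ℝ × E3 → ℝ}
    (hU : ∀ i, ContDiff ℝ (⊤ : ℕ∞) (U i)) (hS : ContDiff ℝ (⊤ : ℕ∞) S)
    (hg : ContDiff ℝ (⊤ : ℕ∞) g) (hh : ContDiff ℝ (⊤ : ℕ∞) h)
    (eul : ∀ k p, pd tm (U k) p + (U 0 p * pd (sp 0) (U k) p + U 1 p * pd (sp 1) (U k) p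
      + U 2 p * pd (sp 2) (U k) p) = pd (sp k) g p + h p * pd (sp k) S p)
    (ent : ∀ p, pd tm S p + (U 0 p * pd (sp 0) S p + U 1 p * pd (sp 1) S p
      + U 2 p * pd (sp 2) S p) = 0) (p : ℝ × E3) :
    pd tm (circ U S) p + (U 0 p * pd (sp 0) (circ U S) p + U 1 p * pd (sp 1) (circ U S) p
      + U 2 p * pd (sp 2) (circ U S) p)
      + circ U S p * (pd (sp 0) (U 0) p + pd (sp 1) (U 1) p + pd (sp 2) (U 2) p) = 0 := by
  have a := pd_smooth hS
  have b := fun i => pd_smooth (hU i)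
  have ag := pd_smooth hg
  -- differentiated transport of a function
  have key : ∀ (F : ℝ × E3 → ℝ), ContDiff ℝ (⊤ : ℕ∞) F → ∀ v,
      pd v (fun p => pd tm F p + (U 0 p * pd (sp 0) F p + U 1 p * pd (sp 1) F p
      + U 2 p * pd (sp 2) F p)) p = pd tm (pd v F) p +
      (U 0 p * pd (sp 0) (pd v F) p + U 1 p * pd (sp 1) (pd v F) p
      + U 2 p * pd (sp 2) (pd v F) p) + (pd v (U 0) p * pd (sp 0) F p
      + pd v (U 1) p * pd (sp 1) F p + pd v (U 2) p * pd (sp 2) F p) := by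
    intro F hF v
    have c := pd_smooth hF
    have m := fun i => (hU i).mul (c (sp i))
    rw [pd_add (c tm) (((m 0).add (m 1)).add (m 2)), pd_add ((m 0).add (m 1)) (m 2),
      pd_add (m 0) (m 1), pd_mul (hU 0) (c _), pd_mul (hU 1) (c _), pd_mul (hU 2) (c _),
      pd_comm hF v tm, pd_comm hF v (sp 0), pd_comm hF v (sp 1), pd_comm hF v (sp 2)]
    ring
  have ent' : ∀ v, _ := fun v => key S hS v
  have eul' : ∀ k v, _ := fun k v => key (U k) (hU k) v
  have ez : (fun p => pd tm S p + (U 0 p * pd (sp 0) S p + U 1 p * pd (sp 1) S p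
      + U 2 p * pd (sp 2) S p)) = fun _ => (0:ℝ) := funext ent
  have uz : ∀ k, (fun p => pd tm (U k) p + (U 0 p * pd (sp 0) (U k) p
      + U 1 p * pd (sp 1) (U k) p + U 2 p * pd (sp 2) (U k) p))
      = fun p => pd (sp k) g p + h p * pd (sp k) S p := fun k => funext (eul k)
  have pz : ∀ v, pd v (fun _ => (0:ℝ)) p = 0 := by intro v; simp [pd]
  rw [ez] at ent'
  simp only [pz] at ent'
  simp only [uz] at eul'
  have eul2 : ∀ k v, pd v (pd (sp k) g) p + (h p * pd v (pd (sp k) S) p + pd (sp k) S p * pd v h p)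
      = pd tm (pd v (U k)) p +
      (U 0 p * pd (sp 0) (pd v (U k)) p + U 1 p * pd (sp 1) (pd v (U k)) p
      + U 2 p * pd (sp 2) (pd v (U k)) p) + (pd v (U 0) p * pd (sp 0) (U k) p
      + pd v (U 1) p * pd (sp 1) (U k) p + pd v (U 2) p * pd (sp 2) (U k) p) := fun k v => by
    rw [← pd_mul hh (a _), ← pd_add (ag _) (hh.mul (a _))]; exact eul' k v
  have circd : ∀ v, pd v (circ U S) p =
      pd (sp 0) S p * (pd v (pd (sp 1) (U 2)) p - pd v (pd (sp 2) (U 1)) p)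
    + pd (sp 1) S p * (pd v (pd (sp 2) (U 0)) p - pd v (pd (sp 0) (U 2)) p)
    + pd (sp 2) S p * (pd v (pd (sp 0) (U 1)) p - pd v (pd (sp 1) (U 0)) p)
    + (pd v (pd (sp 0) S) p * (pd (sp 1) (U 2) p - pd (sp 2) (U 1) p)
    + pd v (pd (sp 1) S) p * (pd (sp 2) (U 0) p - pd (sp 0) (U 2) p)
    + pd v (pd (sp 2) S) p * (pd (sp 0) (U 1) p - pd (sp 1) (U 0) p)) := by
    intro v
    unfold circ
    have s1 := fun i j k l => (b i (sp j)).sub (b k (sp l))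
    have m := fun n i j k l => (a (sp n)).mul (s1 i j k l)
    rw [pd_add ((m _ _ _ _ _).add (m _ _ _ _ _)) (m _ _ _ _ _),
      pd_add (m _ _ _ _ _) (m _ _ _ _ _), pd_mul (a _) (s1 _ _ _ _),
      pd_mul (a _) (s1 _ _ _ _), pd_mul (a _) (s1 _ _ _ _), pd_sub (b _ _) (b _ _),
      pd_sub (b _ _) (b _ _), pd_sub (b _ _) (b _ _)]
    ring
  simp only [circd]
  unfold circ
  have g01 := pd_comm hg (sp 0) (sp 1) p
  have g02 := pd_comm hg (sp 0) (sp 2) p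
  have g12 := pd_comm hg (sp 1) (sp 2) p
  have S01 := pd_comm hS (sp 0) (sp 1) p
  have S02 := pd_comm hS (sp 0) (sp 2) p
  have S12 := pd_comm hS (sp 1) (sp 2) p
  have E0 := ent' (sp 0)
  have E1 := ent' (sp 1)
  have E2 := ent' (sp 2)
  have V12 := eul2 2 (sp 1)
  have V21 := eul2 1 (sp 2)
  have V20 := eul2 0 (sp 2)
  have V02 := eul2 2 (sp 0)
  have V01 := eul2 1 (sp 0)
  have V10 := eul2 0 (sp 1)
  -- antisymmetrized Euler equations
  linear_combination (-(pd (sp 0) S p)) * (V12 - V21) - pd (sp 1) S p * (V20 - V02)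
    - pd (sp 2) S p * (V01 - V10)
    - (pd (sp 1) (U 2) p - pd (sp 2) (U 1) p) * E0
    - (pd (sp 2) (U 0) p - pd (sp 0) (U 2) p) * E1
    - (pd (sp 0) (U 1) p - pd (sp 1) (U 0) p) * E2
    + pd (sp 0) S p * (g12 + h p * S12) - pd (sp 1) S p * (g02 + h p * S02)
    + pd (sp 2) S p * (g01 + h p * S01)

lemma basis_expand (v : E3) : v = v 0 • EuclideanSpace.single 0 (1:ℝ)
    + v 1 • EuclideanSpace.single 1 (1:ℝ) + v 2 • EuclideanSpace.single 2 (1:ℝ) := by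
  ext i
  fin_cases i <;> simp

lemma clm_expand {G : Type*} [AddCommGroup G] [Module ℝ G] [TopologicalSpace G]
    (A : E3 →L[ℝ] G) (v : E3) : A v = v 0 • A (EuclideanSpace.single 0 1)
    + v 1 • A (EuclideanSpace.single 1 1) + v 2 • A (EuclideanSpace.single 2 1) := by
  conv_lhs => rw [basis_expand v]
  simp only [map_add, map_smul]

lemma clm_det (A : E3 →L[ℝ] E3) : A.det =
    (Matrix.of fun i j : Fin 3 => A (EuclideanSpace.single j 1) i).det := by
  rw [ContinuousLinearMap.det, ← LinearMap.det_toMatrix (EuclideanSpace.basisFun (Fin 3) ℝ).toBasis]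
  congr 1
  try ext i j
  try simp [LinearMap.toMatrix_apply]

lemma det_deriv {M : ℝ → E3 →L[ℝ] E3} {A : E3 →L[ℝ] E3} {t : ℝ}
    (hM : HasDerivAt M (A.comp (M t)) t) :
    HasDerivAt (fun τ => (M τ).det) ((A (EuclideanSpace.single 0 1) 0
      + A (EuclideanSpace.single 1 1) 1 + A (EuclideanSpace.single 2 1) 2) * (M t).det) t := by
  have e : ∀ i j : Fin 3, HasDerivAt (fun τ => M τ (EuclideanSpace.single j 1) i)
      (M t (EuclideanSpace.single j 1) 0 * A (EuclideanSpace.single 0 1) i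
      + M t (EuclideanSpace.single j 1) 1 * A (EuclideanSpace.single 1 1) i
      + M t (EuclideanSpace.single j 1) 2 * A (EuclideanSpace.single 2 1) i) t := by
    intro i j
    have h1 := hM.clm_apply (hasDerivAt_const t (EuclideanSpace.single j (1:ℝ)))
    have h2 := (EuclideanSpace.proj (𝕜 := ℝ) i).hasFDerivAt.comp_hasDerivAt t h1
    refine h2.congr_deriv ?_
    simp only [map_zero, add_zero, ContinuousLinearMap.comp_apply]
    rw [clm_expand A (M t _)]
    simp
  simp only [clm_det, Matrix.det_fin_three, Matrix.of_apply]
  refine HasDerivAt.congr_deriv (((((((e 0 0).mul (e 1 1)).mul (e 2 2)).sub (((e 0 0).mul (e 1 2)).mul (e 2 1))).sub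
    (((e 0 1).mul (e 1 0)).mul (e 2 2))).add (((e 0 1).mul (e 1 2)).mul (e 2 0))).add
    (((e 0 2).mul (e 1 0)).mul (e 2 1)) |>.sub (((e 0 2).mul (e 1 1)).mul (e 2 0))) ?_
  simp only [Pi.mul_apply]
  ring

lemma slice_fderiv {G : Type*} [NormedAddCommGroup G] [NormedSpace ℝ G] {F : ℝ × E3 → G}
    (hF : Differentiable ℝ F) (t : ℝ) (x v : E3) :
    fderiv ℝ (fun y => F (t, y)) x v = fderiv ℝ F (t, x) (0, v) := by
  have := (hF (t, x)).hasFDerivAt.comp x (hasFDerivAt_prodMk_right t x)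
  have h2 : fderiv ℝ (fun y => F (t, y)) x = _ := this.fderiv
  rw [h2]; simp

lemma slice_deriv {G : Type*} [NormedAddCommGroup G] [NormedSpace ℝ G] {F : ℝ × E3 → G}
    (hF : Differentiable ℝ F) (t : ℝ) (x : E3) :
    deriv (fun τ => F (τ, x)) t = fderiv ℝ F (t, x) (1, 0) := by
  have := (hF (t, x)).hasFDerivAt.comp_hasDerivAt t
    ((hasDerivAt_id t).prodMk (hasDerivAt_const t x))
  exact this.deriv

lemma coord_fderiv {F : ℝ × E3 → E3} (hF : Differentiable ℝ F) (p v : ℝ × E3) (i : Fin 3) :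
    fderiv ℝ F p v i = pd v (fun q => F q i) p := by
  have := (EuclideanSpace.proj (𝕜 := ℝ) i).hasFDerivAt.comp p (hF p).hasFDerivAt
  have h2 : fderiv ℝ (fun q => F q i) p = _ := this.fderiv
  unfold pd
  rw [h2]; simp

lemma grad_coord {F : ℝ × E3 → ℝ} (hF : Differentiable ℝ F) (t : ℝ) (x : E3) (i : Fin 3) :
    gradient (fun y => F (t, y)) x i = pd (sp i) F (t, x) := by
  have h1 : inner ℝ (gradient (fun y => F (t, y)) x) (EuclideanSpace.single i (1:ℝ))
    = fderiv ℝ (fun y => F (t, y)) x (EuclideanSpace.single i 1) := by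
    simp [gradient]
  rw [slice_fderiv hF] at h1
  unfold pd sp
  rw [← h1, EuclideanSpace.inner_single_right]
  simp

lemma ent_eq {u : ℝ × E3 → E3} {S : ℝ × E3 → ℝ} (hu : Differentiable ℝ u)
    (hS : Differentiable ℝ S) (t : ℝ) (x : E3) :
    entCircScalar u S t x = circ (fun i p => u p i) S (t, x) := by
  unfold entCircScalar curl3 circ
  rw [PiLp.inner_apply, Fin.sum_univ_three]
  simp only [grad_coord hS, slice_fderiv hu, coord_fderiv hu]
  simp [sp]
  ring

/-- A density transported by the flow: `F J` is constant. -/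
lemma density_const {U : ℝ × E3 → E3} {F : ℝ × E3 → ℝ} (hU : Differentiable ℝ U)
    (hF : Differentiable ℝ F)
    (tr : ∀ p, pd tm F p + (U p 0 * pd (sp 0) F p + U p 1 * pd (sp 1) F p
      + U p 2 * pd (sp 2) F p) + F p * (pd (sp 0) (fun q => U q 0) p
      + pd (sp 1) (fun q => U q 1) p + pd (sp 2) (fun q => U q 2) p) = 0)
    {c : ℝ → E3} (hc : ∀ t, HasDerivAt c (U (t, c t)) t)
    {M : ℝ → E3 →L[ℝ] E3}
    (hM : ∀ t, HasDerivAt M ((fderiv ℝ (fun y => U (t, y)) (c t)).comp (M t)) t) (t : ℝ) :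
    F (t, c t) * (M t).det = F (0, c 0) * (M 0).det := by
  have key : ∀ t, HasDerivAt (fun τ => F (τ, c τ) * (M τ).det) 0 t := by
    intro t
    have h1 := (hF (t, c t)).hasFDerivAt.comp_hasDerivAt t ((hasDerivAt_id t).prodMk (hc t))
    have h2 := h1.mul (det_deriv (hM t))
    refine h2.congr_deriv ?_
    have h3 : fderiv ℝ F (t, c t) (1, U (t, c t)) = pd tm F (t, c t) +
        (U (t, c t) 0 * pd (sp 0) F (t, c t) + U (t, c t) 1 * pd (sp 1) F (t, c t)
      + U (t, c t) 2 * pd (sp 2) F (t, c t)) := by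
      have : ((1:ℝ), U (t, c t)) = tm + (U (t, c t) 0 • sp 0 + U (t, c t) 1 • sp 1
          + U (t, c t) 2 • sp 2) := by
        refine Prod.ext ?_ ?_
        · simp [tm, sp]
        · simpa [tm, sp] using basis_expand (U (t, c t))
      rw [this]
      simp only [map_add, map_smul, pd, smul_eq_mul]
    simp only [slice_fderiv hU, coord_fderiv hU]
    simp only [Function.comp_apply, id, h3]
    have := tr (t, c t)
    simp only [sp] at this ⊢
    linear_combination (M t).det * this
  exact is_const_of_deriv_eq_zero (fun t => (key t).differentiableAt) (fun t => (key t).deriv) t 0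

/-- A scalar transported by the flow is constant. -/
lemma scalar_const {U : ℝ × E3 → E3} {F : ℝ × E3 → ℝ}
    (hF : Differentiable ℝ F)
    (tr : ∀ p, pd tm F p + (U p 0 * pd (sp 0) F p + U p 1 * pd (sp 1) F p
      + U p 2 * pd (sp 2) F p) = 0)
    {c : ℝ → E3} (hc : ∀ t, HasDerivAt c (U (t, c t)) t) (t : ℝ) :
    F (t, c t) = F (0, c 0) := by
  have key : ∀ t, HasDerivAt (fun τ => F (τ, c τ)) 0 t := by
    intro t
    have h1 := (hF (t, c t)).hasFDerivAt.comp_hasDerivAt t ((hasDerivAt_id t).prodMk (hc t))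
    refine h1.congr_deriv ?_
    rw [← tr (t, c t)]
    have : ((1:ℝ), U (t, c t)) = tm + (U (t, c t) 0 • sp 0 + U (t, c t) 1 • sp 1
          + U (t, c t) 2 • sp 2) := by
      refine Prod.ext ?_ ?_
      · simp [tm, sp]
      · simpa [tm, sp] using basis_expand (U (t, c t))
    simp only [this]
    simp only [map_add, map_smul, pd, smul_eq_mul, id]
  exact is_const_of_deriv_eq_zero (fun t => (key t).differentiableAt) (fun t => (key t).deriv) t 0

/-- Three-dimensional entropy circulation constants of motion: the integral
`∫_{φ(t)(V₀)} f(S, ◦/ρ) ◦ dx` over a moving domain is constant in time. -/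
theorem entropy_circulation_constant_of_motion_3d
    (u : ℝ × EuclideanSpace ℝ (Fin 3) → EuclideanSpace ℝ (Fin 3))
    (ρ S g h : ℝ × EuclideanSpace ℝ (Fin 3) → ℝ)
    (hu : ContDiff ℝ (⊤ : ℕ∞) u) (hρ : ContDiff ℝ (⊤ : ℕ∞) ρ) (hS : ContDiff ℝ (⊤ : ℕ∞) S)
    (hg : ContDiff ℝ (⊤ : ℕ∞) g) (hh : ContDiff ℝ (⊤ : ℕ∞) h)
    (hρpos : ∀ (t : ℝ) (x : EuclideanSpace ℝ (Fin 3)), 0 < ρ (t, x))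
    (euler : ∀ (t : ℝ) (x : EuclideanSpace ℝ (Fin 3)),
      deriv (fun τ => u (τ, x)) t + fderiv ℝ (fun y => u (t, y)) x (u (t, x))
        = gradient (fun y => g (t, y)) x + h (t, x) • gradient (fun y => S (t, y)) x)
    (continuity : ∀ (t : ℝ) (x : EuclideanSpace ℝ (Fin 3)),
      deriv (fun τ => ρ (τ, x)) t
        + ∑ i : Fin 3,
            fderiv ℝ (fun y => ρ (t, y) • u (t, y)) x (EuclideanSpace.single i 1) i = 0)
    (entropy : ∀ (t : ℝ) (x : EuclideanSpace ℝ (Fin 3)),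
      deriv (fun τ => S (τ, x)) t + ⟪u (t, x), gradient (fun y => S (t, y)) x⟫ = 0)
    (φ : ℝ × EuclideanSpace ℝ (Fin 3) → EuclideanSpace ℝ (Fin 3))
    (hφ : ContDiff ℝ 1 φ)
    (hφ0 : ∀ x, φ (0, x) = x)
    (hflow : ∀ (t : ℝ) (x : EuclideanSpace ℝ (Fin 3)),
      HasDerivAt (fun τ => φ (τ, x)) (u (t, φ (t, x))) t)
    (hflowD : ∀ (t : ℝ) (x : EuclideanSpace ℝ (Fin 3)),
      HasDerivAt (fun τ => fderiv ℝ (fun y => φ (τ, y)) x)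
        ((fderiv ℝ (fun y => u (t, y)) (φ (t, x))).comp
          (fderiv ℝ (fun y => φ (t, y)) x)) t)
    (hinj : ∀ t : ℝ, Function.Injective (fun x => φ (t, x)))
    (f : ℝ × ℝ → ℝ) (hf : Continuous f)
    (V₀ : Set (EuclideanSpace ℝ (Fin 3)))
    (hV₀b : Bornology.IsBounded V₀) (hV₀m : MeasurableSet V₀) :
    ∀ t : ℝ,
      (∫ x in (fun y => φ (t, y)) '' V₀,
          f (S (t, x), entCircScalar u S t x / ρ (t, x)) * entCircScalar u S t x)
        = ∫ x in V₀,
            f (S (0, x), entCircScalar u S 0 x / ρ (0, x)) * entCircScalar u S 0 x := by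
  intro t
  have du : Differentiable ℝ u := hu.differentiable (by simp)
  have dS := smooth_diff hS
  have dρ := smooth_diff hρ
  have dg := smooth_diff hg
  have hU : ∀ i : Fin 3, ContDiff ℝ (⊤ : ℕ∞) (fun p => u p i) := fun i =>
    (EuclideanSpace.proj (𝕜 := ℝ) i).contDiff.comp hu
  have eul : ∀ (k : Fin 3) p, pd tm (fun q => u q k) p + (u p 0 * pd (sp 0) (fun q => u q k) p
      + u p 1 * pd (sp 1) (fun q => u q k) p + u p 2 * pd (sp 2) (fun q => u q k) p)
      = pd (sp k) g p + h p * pd (sp k) S p := by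
    rintro k ⟨s, x⟩
    have := congrArg (fun v : E3 => v k) (euler s x)
    rw [clm_expand (fderiv ℝ _ x) (u (s, x)), slice_deriv du] at this
    simp only [PiLp.add_apply, PiLp.smul_apply, smul_eq_mul, grad_coord dg, grad_coord dS,
      slice_fderiv du, coord_fderiv du] at this
    exact this
  have ent : ∀ p, pd tm S p + (u p 0 * pd (sp 0) S p + u p 1 * pd (sp 1) S p
      + u p 2 * pd (sp 2) S p) = 0 := by
    rintro ⟨s, x⟩
    have := entropy s x
    rw [slice_deriv dS, PiLp.inner_apply, Fin.sum_univ_three] at this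
    simp only [grad_coord dS] at this
    rw [← this]
    simp only [RCLike.inner_apply, conj_trivial, pd, tm]
    ring
  have cont : ∀ p, pd tm ρ p + (u p 0 * pd (sp 0) ρ p + u p 1 * pd (sp 1) ρ p
      + u p 2 * pd (sp 2) ρ p) + ρ p * (pd (sp 0) (fun q => u q 0) p
      + pd (sp 1) (fun q => u q 1) p + pd (sp 2) (fun q => u q 2) p) = 0 := by
    rintro ⟨s, x⟩
    have := continuity s x
    have dm : Differentiable ℝ (fun p => ρ p • u p) := dρ.smul du
    have e : ∀ v : E3, fderiv ℝ (fun y => ρ (s, y) • u (s, y)) x v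
        = fderiv ℝ (fun p => ρ p • u p) (s, x) (0, v) := slice_fderiv dm s x
    simp only [slice_deriv dρ, Fin.sum_univ_three, e, coord_fderiv dm, PiLp.smul_apply,
      smul_eq_mul] at this
    rw [pd_mul hρ (hU 0), pd_mul hρ (hU 1), pd_mul hρ (hU 2)] at this
    rw [← this]
    simp only [pd, tm, sp]
    ring
  set U : Fin 3 → ℝ × E3 → ℝ := fun i p => u p i with hUdef
  have hcirc := circ_transport (U := U) hU hS hg hh eul ent
  have dcirc := smooth_diff (circ_smooth (U := U) hU hS)
  have dφt : ∀ s, Differentiable ℝ (fun y => φ (s, y)) := fun s =>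
    (hφ.differentiable (by simp)).comp (by fun_prop)
  have det0 : ∀ x, (fderiv ℝ (fun y => φ (0, y)) x).det = 1 := by
    intro x
    have : (fun y => φ (0, y)) = id := funext hφ0
    rw [this, fderiv_id]
    simp [ContinuousLinearMap.det]
  have hS' : ∀ x, S (t, φ (t, x)) = S (0, x) := by
    intro x
    have := scalar_const dS ent (hflow · x) t
    simpa [hφ0] using this
  have hρ' : ∀ x, ρ (t, φ (t, x)) * (fderiv ℝ (fun y => φ (t, y)) x).det = ρ (0, x) := by
    intro x
    have := density_const du dρ cont (hflow · x) (hflowD · x) t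
    rwa [det0 x, mul_one, hφ0 x] at this
  have hc' : ∀ x, circ U S (t, φ (t, x)) * (fderiv ℝ (fun y => φ (t, y)) x).det
      = circ U S (0, x) := by
    intro x
    have := density_const du dcirc hcirc (hflow · x) (hflowD · x) t
    rwa [det0 x, mul_one, hφ0 x] at this
  rw [MeasureTheory.integral_image_eq_integral_abs_det_fderiv_smul MeasureTheory.volume hV₀m
    (fun x _ => ((dφt t) x).hasFDerivAt.hasFDerivWithinAt) ((hinj t).injOn)]
  refine MeasureTheory.setIntegral_congr_fun hV₀m (fun x _ => ?_)
  simp only [ent_eq du dS]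
  rw [← hUdef]
  have p1 := hρpos t (φ (t, x))
  have p0 := hρpos 0 x
  have r := hρ' x
  have hJ : 0 < (fderiv ℝ (fun y => φ (t, y)) x).det := by
    rw [← r] at p0
    exact (mul_pos_iff_of_pos_left p1).1 p0
  rw [abs_of_pos hJ, hS', ← r, ← hc' x, mul_div_mul_right _ _ hJ.ne', smul_eq_mul]
  ring
end
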